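/- Let P be an uncountable partially ordered set and let Ď(P) be the set of downward subsets of P, equipped with the POTS topology of the partial order ⊆ on Ď(P). Then Ď(P) is not second-countable; indeed, for any basis 𝓑 of this topology, the map assigning to each p ∈ P a basic set B_p ∈ 𝓑 with p^≤ ∈ B_p ⊆ {A ∈ Ď(P) : p ∈ A} is injective, so |𝓑| ≥ |P|. -/

import Mathlib

/-!
The up-set `{q | p ≤ q}` has downward complement, and `p ∈ A` says precisely that `A` is not
contained in that complement; hence `{A | p ∈ A}` is a subbasic open neighbourhood of `p^≤`.
If one open set serves both as `B_p` and as `B_q`, then `p ∈ q^≤` and `q ∈ p^≤`, so `p = q`.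
-/

/-- The POTS topology on a preordered set `S`: generated by the subbasis
`{{r | ¬ r ≤ s} : s ∈ S} ∪ {{r | ¬ s ≤ r} : s ∈ S}`. -/
def potsTopology (S : Type*) [Preorder S] : TopologicalSpace S :=
  TopologicalSpace.generateFrom
    ({U | ∃ s : S, U = {r : S | ¬ r ≤ s}} ∪ {U | ∃ s : S, U = {r : S | ¬ s ≤ r}})

/-- `Ď(P)`: the set of downward (lower) subsets of `P`. -/
def DCheck (P : Type*) [Preorder P] : Type _ := {A : Set P // IsLowerSet A}

/-- `Ď(P)` is partially ordered by inclusion. -/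
instance {P : Type*} [Preorder P] : PartialOrder (DCheck P) :=
  Subtype.partialOrder _

/-- `Ď(P)` carries the POTS topology of `⊆`. -/
instance {P : Type*} [Preorder P] : TopologicalSpace (DCheck P) :=
  potsTopology (DCheck P)

open Set TopologicalSpace
open scoped Topology

section SeparatedFamily

variable {ι X : Type*} {x : ι → X} {U : ι → Set X}

theorem injective_of_mem_of_subset {B : ι → Set X}
    (hxU : ∀ ⦃i j⦄, x i ∈ U j → x j ∈ U i → i = j)
    (hxB : ∀ i, x i ∈ B i) (hBU : ∀ i, B i ⊆ U i) : Function.Injective B := fun i j hij =>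
  hxU (hBU j (hij ▸ hxB i)) (hBU i (hij ▸ hxB j))

theorem nonempty_embedding_of_isTopologicalBasis [TopologicalSpace X] {𝓑 : Set (Set X)}
    (h𝓑 : IsTopologicalBasis 𝓑) (hU : ∀ i, U i ∈ 𝓝 (x i))
    (hxU : ∀ ⦃i j⦄, x i ∈ U j → x j ∈ U i → i = j) : Nonempty (ι ↪ 𝓑) := by
  choose B hB hxB hBU using fun i => h𝓑.mem_nhds_iff.mp (hU i)
  have hinj : Function.Injective B := injective_of_mem_of_subset hxU hxB hBU
  exact ⟨⟨fun i => ⟨B i, hB i⟩, fun _ _ hij => hinj (congrArg Subtype.val hij)⟩⟩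

end SeparatedFamily

theorem isOpen_potsTopology_setOf_not_le {S : Type*} [Preorder S] (s : S) :
    IsOpen[potsTopology S] {r | ¬ r ≤ s} :=
  isOpen_generateFrom_of_mem (Or.inl ⟨s, rfl⟩)

namespace DCheck

section Preorder

variable {P : Type*} [Preorder P]

/-- The principal downward set `p^≤`, as the point of `Ď(P)` that basic sets must isolate from
the downward sets omitting `p`. -/
def principal (p : P) : DCheck P := ⟨Iic p, isLowerSet_Iic p⟩

/-- The largest downward set that omits `p`, namely the complement of the up-set of `p`. It turns
`p ∈ A` into the subbasic condition `¬ A ≤ largestOmitting p`. -/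
def largestOmitting (p : P) : DCheck P := ⟨(Ici p)ᶜ, (isUpperSet_Ici p).compl⟩

theorem le_largestOmitting_iff {A : DCheck P} {p : P} : A ≤ largestOmitting p ↔ p ∉ A.val :=
  ⟨fun hA hp => hA hp le_rfl, fun hp _ hq hpq => hp (A.property hpq hq)⟩

theorem isOpen_setOf_mem (p : P) : IsOpen {A : DCheck P | p ∈ A.val} := by
  have hset : {A : DCheck P | p ∈ A.val} = {A | ¬ A ≤ largestOmitting p} := by
    simp only [le_largestOmitting_iff, not_not]
  rw [hset]
  exact isOpen_potsTopology_setOf_not_le (largestOmitting p)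

theorem setOf_mem_mem_nhds_principal (p : P) : {A : DCheck P | p ∈ A.val} ∈ 𝓝 (principal p) :=
  (isOpen_setOf_mem p).mem_nhds (mem_Iic.mpr le_rfl)

end Preorder

section PartialOrder

variable {P : Type*} [PartialOrder P]

theorem eq_of_mem_principal {p q : P} (hqp : q ∈ (principal p).val)
    (hpq : p ∈ (principal q).val) : p = q :=
  le_antisymm hpq hqp

theorem nonempty_embedding_basis {𝓑 : Set (Set (DCheck P))} (h𝓑 : IsTopologicalBasis 𝓑) :
    Nonempty (P ↪ 𝓑) :=
  nonempty_embedding_of_isTopologicalBasis h𝓑 setOf_mem_mem_nhds_principal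
    fun _ _ => eq_of_mem_principal

theorem countable_of_secondCountableTopology [SecondCountableTopology (DCheck P)] :
    Countable P := by
  obtain ⟨f⟩ := nonempty_embedding_basis (isBasis_countableBasis (DCheck P))
  exact f.injective.countable

end PartialOrder

end DCheck

/-- For uncountable `P`, `Ď(P)` is not second-countable; indeed any assignment
`p ↦ B p` of basic sets with `p^≤ ∈ B p ⊆ {A ∈ Ď(P) : p ∈ A}` taken from a basis `𝓑`
is injective, so `|𝓑| ≥ |P|`. -/
theorem dCheck_not_secondCountable_of_uncountable (P : Type*) [PartialOrder P]
    (hP : ¬ Countable P) :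
    ¬ SecondCountableTopology (DCheck P) ∧
      ∀ 𝓑 : Set (Set (DCheck P)), TopologicalSpace.IsTopologicalBasis 𝓑 →
        (∀ B : P → Set (DCheck P),
          (∀ p : P, B p ∈ 𝓑 ∧
            (⟨Set.Iic p, isLowerSet_Iic p⟩ : DCheck P) ∈ B p ∧
            B p ⊆ {A : DCheck P | p ∈ A.val}) →
          Function.Injective B) ∧
        Cardinal.mk P ≤ Cardinal.mk 𝓑 := by
  refine ⟨fun _ => hP DCheck.countable_of_secondCountableTopology, fun 𝓑 h𝓑 => ⟨?_, ?_⟩⟩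
  · intro B hB
    exact injective_of_mem_of_subset (fun _ _ => DCheck.eq_of_mem_principal)
      (fun p => (hB p).2.1) (fun p => (hB p).2.2)
  · obtain ⟨f⟩ := DCheck.nonempty_embedding_basis h𝓑
    exact Cardinal.mk_le_of_injective f.injective
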